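/- arXiv:math/0603166 — 2 statements merged into one kernel-verified Lean document; each statement's English description precedes it below -/
import Mathlib

section
/- (Class exponents are pairwise coprime.) Let (L₁,…,L_k; m; X) be a multinet on a line arrangement L in the complex projective plane, with the multiplicities m(ℓ), ℓ ∈ L, having greatest common divisor 1. For each i, let e_i = gcd{ m(ℓ) : ℓ ∈ L_i }. Then gcd(e_i, e_j) = 1 for all i ≠ j. -/
/-!
Write `e_i` for the gcd of the multiplicities in class `i`, `q_i = d / e_i`, and let
`D_i = ∏ ℓ ^ (m(ℓ) / e_i)` (product over the lines of the class) be the primitive curve of degree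
`q_i` attached to class `i`. The proof studies the graded ring `R = ⨁ R_r`, where `R_r` consists of
the forms `F` of degree `r` with `d * mult_p F ≥ r * n_p` at every base point `p`. It contains
every `D_i`.

Every line `ℓ` of the arrangement satisfies `∑ n_p = d` over the base points on `ℓ`
(`Multinet.sum_n`), so by Bézout on `ℓ` an element of `R` vanishing at a single point of `ℓ` outside
the base locus vanishes on all of `ℓ` (`Multinet.vanish_of_eval_eq_zero`). Splitting such an `F` as
`∏ ℓ ^ a(ℓ) * H`, with `H` not divisible by a line of the class, and applying Bézout to `H` shows
that the intersection matrix of the class, corrected at the base points, sends `a` to a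
nonpositive vector. By connectivity of the class, as in Zariski's lemma on fibres, `a` is
proportional to `m` (`Multinet.proportional`). Hence `D_i` divides `F`, with quotient in `R`.

Consequently evaluation at a point `y_i` on a line of class `i`, outside the base locus, has kernel
`D_i * R`, and `h(r) = dim R_r` satisfies `h(r) = [r ∈ S_i] + h(r - q_i)` where `S_i` is the
semigroup of degrees of elements of `R` not vanishing at `y_i` (`Multinet.finrank_R`). Let `c_i` be
the gcd of `S_i`. Three facts follow.

* `h(u * lcm(c_i, q_i)) = u + O(1)`, so `Λ = lcm(c_i, q_i)` does not depend on `i`.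
* `g = gcd(c_i, q_i)` is the gcd of all degrees occurring in `R`, so it does not depend on `i`.
* `c_j ∣ q_i` for `i ≠ j`, because `D_i` does not vanish at `y_j`.

So `c_i * q_i = g * Λ` and `gcd(c_i, c_j) = g`, which together with `e_i * q_i = d` gives
`d = Λ * gcd(e_i, e_j)` for all `i ≠ j` (`gcd_arith`). The number `gcd(e_i, e_j)` is therefore the
same for all pairs, hence divides every `e_l` and every multiplicity, and so equals `1`.
-/

open Finset
open scoped Classical

/-! ### Functions satisfying `h(n) = [n ∈ S] + h(n - q)` -/

/-- Unrolling the recurrence: `h n` counts the `j` with `n - j * q ∈ S`. -/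
lemma card_count (h : ℕ → ℕ) (S : Set ℕ) (q : ℕ) (hq : 0 < q)
    (hrec : ∀ n, h n = (if n ∈ S then 1 else 0) + (if q ≤ n then h (n - q) else 0)) (n : ℕ) :
    h n = #{j ∈ range (n / q + 1) | n - j * q ∈ S} := by
  induction n using Nat.strong_induction_on with
  | _ n ih =>
    rw [hrec n, Finset.card_filter, Finset.sum_range_succ', add_comm]
    congr 1
    · split_ifs with hqn
      · rw [ih (n - q) (by omega), Finset.card_filter]
        have : n / q = (n - q) / q + 1 := by
          rw [← Nat.add_div_right _ hq]; congr 1; omega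
        rw [this]
        refine Finset.sum_congr rfl fun j _ => ?_
        have : n - (j + 1) * q = n - q - j * q := by rw [add_mul, one_mul]; omega
        rw [this]
      · rw [Nat.div_eq_of_lt (by omega)]; simp
    · simp

/-- Along multiples of `lcm (gcd S) q` the function `h` is `u + O(1)`, because the numerical
semigroup `S` contains all large multiples of its gcd. -/
lemma hilbert_bounds (h : ℕ → ℕ) (S : Set ℕ) (h0 : 0 ∈ S)
    (hadd : ∀ a ∈ S, ∀ b ∈ S, a + b ∈ S) (q : ℕ) (hq : 0 < q) (hc : 0 < Nat.setGcd S)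
    (hrec : ∀ n, h n = (if n ∈ S then 1 else 0) + (if q ≤ n then h (n - q) else 0)) :
    ∃ K, ∀ u, u ≤ h (u * Nat.lcm (Nat.setGcd S) q) + K ∧
      h (u * Nat.lcm (Nat.setGcd S) q) ≤ u + 1 := by
  obtain ⟨N, hN⟩ := Nat.exists_mem_closure_of_ge S
  have hcl : ∀ x ∈ AddSubmonoid.closure S, x ∈ S := fun x hx =>
    AddSubmonoid.closure_induction (fun _ h => h) h0 (fun a b _ _ ha hb => hadd a ha b hb) hx
  set c := Nat.setGcd S with hcdef
  set g := Nat.gcd c q with hg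
  have hgpos : 0 < g := Nat.gcd_pos_of_pos_right _ hq
  obtain ⟨c', hc'⟩ : g ∣ c := Nat.gcd_dvd_left _ _
  have hc'pos : 0 < c' := by
    rcases Nat.eq_zero_or_pos c' with h | h
    · simp [h] at hc'; omega
    · exact h
  have hlcm : Nat.lcm c q = c' * q := by
    have := Nat.gcd_mul_lcm c q
    rw [← hg] at this
    apply Nat.eq_of_mul_eq_mul_left hgpos
    rw [this, ← mul_assoc, ← hc']
  have hcl' : c ∣ c' * q := hlcm ▸ Nat.dvd_lcm_left c q
  have hpos : 0 < c' * q := by positivity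
  refine ⟨N, fun u => ?_⟩
  rw [card_count h S q hq hrec, hlcm]
  have hdiv : u * (c' * q) / q = u * c' := by
    rw [← mul_assoc, Nat.mul_div_cancel _ hq]
  rw [hdiv]
  constructor
  · have hsub : (range (u + 1 - N)).image (fun j => j * c') ⊆
        {j ∈ range (u * c' + 1) | u * (c' * q) - j * q ∈ S} := by
      intro j hj
      simp only [mem_image, mem_range, mem_filter] at hj ⊢
      obtain ⟨i, hi, rfl⟩ := hj
      have e : u * (c' * q) - i * c' * q = (u - i) * (c' * q) := by
        rw [Nat.sub_mul, mul_assoc i]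
      refine ⟨?_, ?_⟩
      · have : i * c' ≤ u * c' := Nat.mul_le_mul_right _ (by omega)
        omega
      · rw [e]
        apply hcl
        apply hN
        · calc N ≤ u - i := by omega
            _ ≤ (u - i) * (c' * q) := Nat.le_mul_of_pos_right _ hpos
        · exact hcl'.mul_left _
    have := Finset.card_le_card hsub
    rw [Finset.card_image_of_injective _ (fun a b hab => Nat.eq_of_mul_eq_mul_right hc'pos hab),
      card_range] at this
    omega
  · have hsub : {j ∈ range (u * c' + 1) | u * (c' * q) - j * q ∈ S} ⊆
        (range (u + 1)).image (fun j => j * c') := by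
      intro j hj
      simp only [mem_image, mem_range, mem_filter] at hj ⊢
      obtain ⟨hj1, hj2⟩ := hj
      have hle : j * q ≤ u * (c' * q) := by
        rw [← mul_assoc]; exact Nat.mul_le_mul_right _ (by omega)
      have hd : c ∣ j * q := by
        have h1 := Nat.setGcd_dvd_of_mem hj2
        have h2 : c ∣ u * (c' * q) := hcl'.mul_left _
        exact (Nat.dvd_sub_iff_right hle h2).1 h1
      have hd' : c' ∣ j := by
        have h3 : Nat.lcm c q ∣ j * q := Nat.lcm_dvd hd (dvd_mul_left _ _)
        rw [hlcm] at h3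
        exact Nat.dvd_of_mul_dvd_mul_right hq h3
      obtain ⟨i, rfl⟩ := hd'
      refine ⟨i, ?_, mul_comm _ _⟩
      by_contra hi
      have : (u + 1) * c' ≤ c' * i := by rw [mul_comm c']; exact Nat.mul_le_mul_right _ (by omega)
      rw [add_mul] at this
      omega
    exact (Finset.card_le_card hsub).trans (card_image_le.trans (by simp))

/-- Comparison of growth rates at common multiples of `a` and `b`. -/
lemma hilbert_lcm_le (h : ℕ → ℕ) (a b K : ℕ) (ha : ∀ u, u ≤ h (u * a) + K)
    (hb : ∀ u, h (u * b) ≤ u + 1) : b ≤ a := by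
  by_contra hlt
  push Not at hlt
  have h1 := ha ((K + 2) * b)
  have h2 := hb ((K + 2) * a)
  rw [mul_right_comm] at h1
  have : (K + 2) * (a + 1) ≤ (K + 2) * b := Nat.mul_le_mul_left _ hlt
  rw [mul_add] at this
  omega

/-- The final arithmetic: from `c * q = g * Λ` for both indices and `gcd ci cj = g` one gets
`g * d = gcd (ci * d) (cj * d) = g * Λ * gcd ei ej`. -/
lemma gcd_arith {d Λ g ci cj qi qj ei ej : ℕ} (hg0 : 0 < g)
    (hgi : Nat.gcd ci qi = g) (hgj : Nat.gcd cj qj = g)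
    (hli : Nat.lcm ci qi = Λ) (hlj : Nat.lcm cj qj = Λ) (hei : ei * qi = d) (hej : ej * qj = d)
    (hcj : cj ∣ qi) : d = Λ * Nat.gcd ei ej := by
  have pi : g * Λ = ci * qi := by rw [← hgi, ← hli, Nat.gcd_mul_lcm]
  have pj : g * Λ = cj * qj := by rw [← hgj, ← hlj, Nat.gcd_mul_lcm]
  have hgc : Nat.gcd ci cj = g := by
    apply Nat.dvd_antisymm
    · rw [← hgi]; exact Nat.gcd_dvd_gcd_of_dvd_right _ hcj
    · exact Nat.dvd_gcd (hgi ▸ Nat.gcd_dvd_left _ _) (hgj ▸ Nat.gcd_dvd_left _ _)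
  have h1 : ci * d = g * Λ * ei := by rw [pi, ← hei]; ring
  have h2 : cj * d = g * Λ * ej := by rw [pj, ← hej]; ring
  have h3 : g * d = g * (Λ * Nat.gcd ei ej) := by
    rw [← mul_assoc, ← Nat.gcd_mul_left, ← h1, ← h2, Nat.gcd_mul_right, hgc]
  exact Nat.eq_of_mul_eq_mul_left hg0 h3

/-! ### Vanishing orders and Bézout on a line -/

lemma eq_of_common_vector {p p' : Submodule ℂ (Fin 3 → ℂ)} (hp : Module.finrank ℂ p = 1)
    (hp' : Module.finrank ℂ p' = 1) {v : Fin 3 → ℂ} (hv : v ≠ 0) (h : v ∈ p) (h' : v ∈ p') :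
    p = p' := by
  have key : ∀ r : Submodule ℂ (Fin 3 → ℂ), Module.finrank ℂ r = 1 → v ∈ r →
      Submodule.span ℂ {v} = r := fun r hr hvr =>
    Submodule.eq_of_le_of_finrank_eq (by simpa using hvr) (by rw [finrank_span_singleton hv, hr])
  exact (key p hp h).symm.trans (key p' hp' h' : Submodule.span ℂ {v} = _)

/-- A line contains a point outside any finite set of points, since a vector space over an infinite
field is not a finite union of proper subspaces. -/
lemma exists_avoiding {ℓ : Submodule ℂ (Fin 3 → ℂ)} (hℓ : Module.finrank ℂ ℓ = 2)
    (P : Finset (Submodule ℂ (Fin 3 → ℂ))) (hP : ∀ p ∈ P, Module.finrank ℂ p = 1) :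
    ∃ z ∈ ℓ, z ≠ 0 ∧ ∀ p ∈ P, z ∉ p := by
  have htop : (⊤ : Submodule ℂ ℓ) ∉
      insert ⊥ (P.image fun p => Submodule.comap ℓ.subtype p) := by
    intro h
    rw [mem_insert, mem_image] at h
    rcases h with h | ⟨p, hp, h⟩
    · have : Module.finrank ℂ (⊤ : Submodule ℂ ℓ) = 0 := by rw [h]; simp
      rw [finrank_top] at this; omega
    · have : ℓ ≤ p := by
        intro z hz
        have : (⟨z, hz⟩ : ℓ) ∈ (⊤ : Submodule ℂ ℓ) := trivial
        rw [← h] at this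
        exact this
      have := Submodule.finrank_mono this
      have := hP p hp
      omega
  have := Subspace.biUnion_ne_univ_of_top_notMem htop
  rw [Set.ne_univ_iff_exists_notMem] at this
  obtain ⟨z, hz⟩ := this
  simp only [Set.mem_iUnion, not_exists, mem_insert, mem_image] at hz
  refine ⟨z, z.2, fun h0 => hz ⊥ (Or.inl rfl) (by simpa using h0), fun p hp hzp =>
    hz _ (Or.inr ⟨p, hp, rfl⟩) hzp⟩

/-- The Taylor expansion `F(v + T * x)` of `F` at `v`, as a polynomial in `T` whose coefficients are
polynomials in `x`. -/
noncomputable def taylorAt (v : Fin 3 → ℂ) :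
    MvPolynomial (Fin 3) ℂ →ₐ[ℂ] Polynomial (MvPolynomial (Fin 3) ℂ) :=
  MvPolynomial.aeval fun i =>
    Polynomial.C (MvPolynomial.C (v i)) + Polynomial.X * Polynomial.C (MvPolynomial.X i)

/-- Specialising `x` to `z` gives the restriction of `F` to the affine line `v + T * z`. -/
lemma taylorAt_line (v z : Fin 3 → ℂ) (F : MvPolynomial (Fin 3) ℂ) :
    (taylorAt v F).map (MvPolynomial.eval z) =
      MvPolynomial.aeval (fun i => Polynomial.C (v i) + Polynomial.X * Polynomial.C (z i)) F := by
  have : (Polynomial.mapRingHom (MvPolynomial.eval z)).comp (taylorAt v).toRingHom =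
      (MvPolynomial.aeval (R := ℂ)
        (fun i => Polynomial.C (v i) + Polynomial.X * Polynomial.C (z i))).toRingHom := by
    apply MvPolynomial.ringHom_ext
    · intro r
      simp [taylorAt]
    · intro i
      simp [taylorAt]
  exact congrArg (fun f => f F) this

/-- The substitution `T = 1`, `x ↦ x - v` inverts the Taylor expansion. -/
lemma taylorAt_injective (v : Fin 3 → ℂ) : Function.Injective (taylorAt v) := by
  let ψ : Polynomial (MvPolynomial (Fin 3) ℂ) →+* MvPolynomial (Fin 3) ℂ :=
    Polynomial.eval₂RingHom
      (MvPolynomial.aeval (R := ℂ) (fun i => (MvPolynomial.X i - MvPolynomial.C (v i)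
        : MvPolynomial (Fin 3) ℂ))).toRingHom 1
  have h : ψ.comp (taylorAt v).toRingHom = RingHom.id _ := by
    apply MvPolynomial.ringHom_ext
    · intro r
      simp [taylorAt]
      simp [ψ]
    · intro i
      simp [taylorAt, ψ]
  intro F G hFG
  have h' := fun F => congrArg (fun f => f F) h
  simp only [RingHom.comp_apply, RingHom.id_apply] at h'
  rw [← h' F, ← h' G]
  exact congrArg ψ hFG

/-- Bézout for a curve and a line not contained in it: a polynomial of degree at most `n` which is
nonzero at some point of `ℓ` vanishes on `ℓ` to total order at most `n`. The line is parametrised as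
`y + t * z` with `z` chosen off the points of `P`, so that each of them is reached at a finite
parameter. -/
lemma sum_orders_le {H : MvPolynomial (Fin 3) ℂ} {n : ℕ} (hH : H.totalDegree ≤ n)
    {ℓ : Submodule ℂ (Fin 3 → ℂ)} (hℓ : Module.finrank ℂ ℓ = 2)
    (P : Finset (Submodule ℂ (Fin 3 → ℂ))) (hP : ∀ p ∈ P, Module.finrank ℂ p = 1)
    (hPℓ : ∀ p ∈ P, p ≤ ℓ) (μ : Submodule ℂ (Fin 3 → ℂ) → ℕ)
    (hμ : ∀ p ∈ P, ∀ v ∈ p, v ≠ 0 → Polynomial.X ^ μ p ∣ taylorAt v H)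
    {y : Fin 3 → ℂ} (hy : y ∈ ℓ) (hy0 : y ≠ 0) (hHy : MvPolynomial.eval y H ≠ 0) :
    ∑ p ∈ P, μ p ≤ n := by
  obtain ⟨z, hz, hz0, hzP⟩ := exists_avoiding hℓ (insert (Submodule.span ℂ {y}) P) (by
    intro p hp
    rcases mem_insert.1 hp with rfl | hp
    · exact finrank_span_singleton hy0
    · exact hP p hp)
  have hzy : z ∉ Submodule.span ℂ {y} := hzP _ (mem_insert_self _ _)
  have hli : LinearIndependent ℂ ![y, z] := by
    rw [LinearIndependent.pair_iff' hy0]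
    intro a ha
    exact hzy (Submodule.mem_span_singleton.2 ⟨a, ha⟩)
  have hspan : Submodule.span ℂ {y, z} = ℓ := by
    apply Submodule.eq_of_le_of_finrank_eq
    · rw [Submodule.span_le]
      rintro x (rfl | rfl)
      · exact hy
      · exact hz
    · have := finrank_span_eq_card hli
      rw [Matrix.range_cons, Matrix.range_cons, Matrix.range_empty, Set.union_empty,
        Set.singleton_union] at this
      rw [this, hℓ]; rfl
  have hpt : ∀ p ∈ P, ∃ t : ℂ, y + t • z ∈ p := by
    intro p hp
    obtain ⟨v, hv, hv0⟩ := p.ne_bot_iff.1 (by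
      rintro rfl
      simpa using hP _ hp)
    obtain ⟨a, b, hab⟩ := Submodule.mem_span_pair.1 (hspan ▸ hPℓ p hp hv : v ∈ Submodule.span ℂ {y, z})
    have ha : a ≠ 0 := by
      rintro rfl
      rw [zero_smul, zero_add] at hab
      have hb : b ≠ 0 := by rintro rfl; exact hv0 (by simpa using hab.symm)
      refine hzP p (mem_insert_of_mem hp) ?_
      rw [← hab] at hv
      exact (p.smul_mem_iff hb).1 hv
    refine ⟨a⁻¹ * b, ?_⟩
    have := p.smul_mem a⁻¹ hv
    rwa [← hab, smul_add, smul_smul, smul_smul, inv_mul_cancel₀ ha, one_smul] at this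
  choose! t ht using hpt
  have hne : ∀ s : ℂ, y + s • z ≠ 0 := by
    intro s hs
    have := (LinearIndependent.pair_iff.1 hli) 1 s (by simpa using hs)
    exact one_ne_zero this.1
  set f : Polynomial ℂ :=
    MvPolynomial.aeval (fun i => Polynomial.C (y i) + Polynomial.X * Polynomial.C (z i)) H with hf
  have hf0 : f ≠ 0 := by
    intro h
    apply hHy
    have h2 := congrArg (Polynomial.aeval (0 : ℂ)) h
    rw [hf, MvPolynomial.comp_aeval_apply] at h2
    simpa [MvPolynomial.aeval_eq_eval] using h2
  have hdeg : f.natDegree ≤ n := by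
    have := MvPolynomial.aeval_natDegree_le (n := 1) H hH
      (fun i => Polynomial.C (y i) + Polynomial.X * Polynomial.C (z i)) (by
        intro i
        compute_degree)
    rwa [mul_one] at this
  have hdvd : ∀ p ∈ P, (Polynomial.X - Polynomial.C (t p)) ^ μ p ∣ f := by
    intro p hp
    have h1 := hμ p hp _ (ht p hp) (hne _)
    have h2 := Polynomial.map_dvd (MvPolynomial.eval z) h1
    rw [taylorAt_line, Polynomial.map_pow, Polynomial.map_X] at h2
    have h3 := map_dvd (Polynomial.compRingHom (Polynomial.X - Polynomial.C (t p))) h2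
    simp only [map_pow, Polynomial.coe_compRingHom_apply, Polynomial.X_comp] at h3
    convert h3 using 1
    change f = Polynomial.aeval _ _
    rw [MvPolynomial.comp_aeval_apply, hf]
    congr 2
    funext i
    simp
    ring
  have hprod : ∏ p ∈ P, (Polynomial.X - Polynomial.C (t p)) ^ μ p ∣ f := by
    apply Finset.prod_dvd_of_coprime
    · intro p hp p' hp' hne'
      apply IsCoprime.pow
      apply Polynomial.isCoprime_X_sub_C_of_isUnit_sub
      rw [isUnit_iff_ne_zero, sub_ne_zero]
      intro h
      exact hne' (eq_of_common_vector (hP p hp) (hP p' hp') (hne _) (ht p hp) (h ▸ ht p' hp'))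
    · exact hdvd
  have := Polynomial.natDegree_le_of_dvd hprod hf0
  rw [Polynomial.natDegree_prod_of_monic _ _ (fun p _ => (Polynomial.monic_X_sub_C _).pow _)] at this
  simp only [Polynomial.natDegree_pow, Polynomial.natDegree_X_sub_C, mul_one] at this
  omega

lemma homogeneous_eval_smul {F : MvPolynomial (Fin 3) ℂ} {n : ℕ} (hF : F.IsHomogeneous n)
    (c : ℂ) (v : Fin 3 → ℂ) :
    MvPolynomial.eval (c • v) F = c ^ n * MvPolynomial.eval v F := by
  rw [MvPolynomial.eval_eq, MvPolynomial.eval_eq, Finset.mul_sum]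
  refine Finset.sum_congr rfl fun e he => ?_
  have : ∑ i ∈ e.support, e i = n := hF.degree_eq_sum_deg_support he |>.symm
  simp only [Pi.smul_apply, smul_eq_mul, mul_pow]
  rw [Finset.prod_mul_distrib, Finset.prod_pow_eq_pow_sum, this]
  ring

section
attribute [local instance] MvPolynomial.gradedAlgebra

/-- A cofactor of a nonzero form in a nonzero form is itself a form. -/
lemma homogeneous_of_mul {P G : MvPolynomial (Fin 3) ℂ} {a N : ℕ} (hP : P.IsHomogeneous a)
    (hP0 : P ≠ 0) (hG0 : G ≠ 0) (hPG : (P * G).IsHomogeneous N) :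
    ∃ b, N = a + b ∧ G.IsHomogeneous b := by
  have key : ∀ j, MvPolynomial.homogeneousComponent (a + j) (P * G) =
      P * MvPolynomial.homogeneousComponent j G := fun j => by
    have := DirectSum.coe_decompose_mul_add_of_left_mem (j := j) (b := G)
      (MvPolynomial.homogeneousSubmodule (Fin 3) ℂ)
      ((MvPolynomial.mem_homogeneousSubmodule a P).2 hP)
    have e : ∀ (Q : MvPolynomial (Fin 3) ℂ) i,
        (DirectSum.decompose (MvPolynomial.homogeneousSubmodule (Fin 3) ℂ) Q i :
          MvPolynomial (Fin 3) ℂ) = MvPolynomial.homogeneousComponent i Q :=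
      fun Q i => MvPolynomial.decomposition.decompose'_apply Q i
    rwa [e, e] at this
  have hj : ∃ j, MvPolynomial.homogeneousComponent j G ≠ 0 := by
    by_contra h
    push Not at h
    apply hG0
    rw [← MvPolynomial.sum_homogeneousComponent G]
    exact Finset.sum_eq_zero fun i _ => h i
  obtain ⟨j, hj⟩ := hj
  have h1 := key j
  rw [MvPolynomial.homogeneousComponent_of_mem
    ((MvPolynomial.mem_homogeneousSubmodule N _).2 hPG)] at h1
  split_ifs at h1 with hN
  · refine ⟨j, hN.symm, ?_⟩
    rw [mul_left_cancel₀ hP0 h1]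
    exact MvPolynomial.homogeneousComponent_isHomogeneous _ _
  · exact absurd h1.symm (mul_ne_zero hP0 hj)
end

/-- The order of vanishing of `F` at the vector `v`: the lowest degree in `T` of `F(v + T * x)`. Its
value at `F = 0` is the junk value `0`. For a form and `v ≠ 0` it is the multiplicity of the curve
`F = 0` at the point spanned by `v`. -/
noncomputable def ordAt (v : Fin 3 → ℂ) (F : MvPolynomial (Fin 3) ℂ) : ℕ :=
  (taylorAt v F).natTrailingDegree

lemma taylorAt_ne_zero (v : Fin 3 → ℂ) {F : MvPolynomial (Fin 3) ℂ} (hF : F ≠ 0) :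
    taylorAt v F ≠ 0 := fun h => hF (taylorAt_injective v (by rw [h, map_zero]))

lemma ordAt_mul (v : Fin 3 → ℂ) {F G : MvPolynomial (Fin 3) ℂ} (hF : F ≠ 0) (hG : G ≠ 0) :
    ordAt v (F * G) = ordAt v F + ordAt v G := by
  rw [ordAt, map_mul, Polynomial.natTrailingDegree_mul (taylorAt_ne_zero v hF)
    (taylorAt_ne_zero v hG)]
  rfl

lemma ordAt_one (v : Fin 3 → ℂ) : ordAt v 1 = 0 := by
  rw [ordAt, map_one, Polynomial.natTrailingDegree_one]

lemma ordAt_pow (v : Fin 3 → ℂ) {F : MvPolynomial (Fin 3) ℂ} (hF : F ≠ 0) (a : ℕ) :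
    ordAt v (F ^ a) = a * ordAt v F := by
  induction a with
  | zero => simp [ordAt_one]
  | succ a ih => rw [pow_succ, ordAt_mul v (pow_ne_zero _ hF) hF, ih]; ring

lemma ordAt_prod {ι : Type*} (v : Fin 3 → ℂ) (s : Finset ι) (f : ι → MvPolynomial (Fin 3) ℂ)
    (hf : ∀ i ∈ s, f i ≠ 0) : ordAt v (∏ i ∈ s, f i) = ∑ i ∈ s, ordAt v (f i) := by
  induction s using Finset.induction_on with
  | empty => simp [ordAt_one]
  | insert i s hi ih =>
    rw [prod_insert hi, sum_insert hi, ordAt_mul v (hf i (mem_insert_self _ _))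
      (prod_ne_zero_iff.2 fun j hj => hf j (mem_insert_of_mem hj)),
      ih fun j hj => hf j (mem_insert_of_mem hj)]

lemma X_pow_dvd_taylorAt {v : Fin 3 → ℂ} {F : MvPolynomial (Fin 3) ℂ} {a : ℕ}
    (h : a ≤ ordAt v F) : Polynomial.X ^ a ∣ taylorAt v F := by
  rw [Polynomial.X_pow_dvd_iff]
  exact fun d hd => Polynomial.coeff_eq_zero_of_lt_natTrailingDegree (hd.trans_le h)

lemma taylorAt_coeff_zero (v : Fin 3 → ℂ) (F : MvPolynomial (Fin 3) ℂ) :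
    (taylorAt v F).coeff 0 = MvPolynomial.C (MvPolynomial.eval v F) := by
  have : (Polynomial.constantCoeff.comp (taylorAt v).toRingHom) =
      MvPolynomial.C.comp (MvPolynomial.eval v) := by
    apply MvPolynomial.ringHom_ext
    · intro r
      simp [taylorAt]
    · intro i
      simp [taylorAt]
  exact congrArg (fun f => f F) this

/-! ### Equations of lines -/

/-- `P` is a linear form cutting out the line `ℓ`; the consequences used later (order of vanishing
along `ℓ`, divisibility of whatever vanishes on `ℓ`) are recorded as fields. -/
structure IsEquation (ℓ : Submodule ℂ (Fin 3 → ℂ)) (P : MvPolynomial (Fin 3) ℂ) : Prop where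
  ne_zero : P ≠ 0
  homogeneous : P.IsHomogeneous 1
  mem_iff : ∀ z, z ∈ ℓ ↔ MvPolynomial.eval z P = 0
  ord_eq : ∀ v, ordAt v P = if v ∈ ℓ then 1 else 0
  dvd : ∀ F, (∀ z ∈ ℓ, MvPolynomial.eval z F = 0) → P ∣ F

lemma exists_isEquation {ℓ : Submodule ℂ (Fin 3 → ℂ)} (hℓ : Module.finrank ℂ ℓ = 2) :
    ∃ P, IsEquation ℓ P := by
  obtain ⟨f, hf0, hfℓ⟩ := Submodule.exists_le_ker_of_lt_top ℓ (by
    rw [lt_top_iff_ne_top]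
    rintro rfl
    simp at hℓ)
  have hker : ℓ = LinearMap.ker f := by
    apply Submodule.eq_of_le_of_finrank_le hfℓ
    have h1 := LinearMap.finrank_range_add_finrank_ker f
    have h2 : 0 < Module.finrank ℂ (LinearMap.range f) := by
      rw [Module.finrank_pos_iff, Submodule.nontrivial_iff_ne_bot, ne_eq, LinearMap.range_eq_bot]
      exact hf0
    rw [Module.finrank_fin_fun] at h1
    omega
  have hmem : ∀ z, z ∈ ℓ ↔ f z = 0 := fun z => by rw [hker, LinearMap.mem_ker]
  set a : Fin 3 → ℂ := fun i => f (Pi.single i 1) with ha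
  have hfa : ∀ z, f z = ∑ i, a i * z i := by
    intro z
    conv_lhs => rw [pi_eq_sum_univ' z]
    simp [ha, mul_comm, Pi.single]
  set P : MvPolynomial (Fin 3) ℂ := ∑ i, MvPolynomial.C (a i) * MvPolynomial.X i with hP
  have heval : ∀ z, MvPolynomial.eval z P = f z := by
    intro z; rw [hfa, hP]; simp
  have hP0 : P ≠ 0 := by
    intro h
    apply hf0
    refine LinearMap.ext fun z => ?_
    rw [← heval, h, map_zero, LinearMap.zero_apply]
  have htay : ∀ v, taylorAt v P = Polynomial.C (MvPolynomial.C (f v)) +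
      Polynomial.X * Polynomial.C P := by
    intro v
    simp only [hP, hfa, taylorAt, map_sum, map_mul, MvPolynomial.aeval_X, Finset.mul_sum,
      ← Finset.sum_add_distrib]
    refine Finset.sum_congr rfl fun i _ => ?_
    rw [MvPolynomial.aeval_C]
    change Polynomial.C (MvPolynomial.C (a i)) * _ = _
    ring
  refine ⟨P, hP0, ?_, fun z => by rw [hmem, heval], ?_, ?_⟩
  · exact MvPolynomial.IsHomogeneous.sum _ _ _ fun i _ => MvPolynomial.isHomogeneous_C_mul_X _ _
  · intro v
    rw [ordAt, htay]
    split_ifs with h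
    · rw [(hmem v).1 h]
      simp only [map_zero, zero_add]
      rw [Polynomial.natTrailingDegree_mul Polynomial.X_ne_zero (Polynomial.C_ne_zero.2 hP0)]
      simp
    · rw [Polynomial.natTrailingDegree_eq_zero]
      right
      simpa [← hmem] using h
  · intro F hF
    obtain ⟨w, hw⟩ : ∃ w, f w = 1 := by
      obtain ⟨u, hu⟩ : ∃ u, f u ≠ 0 := by
        by_contra h
        push Not at h
        exact hf0 (LinearMap.ext h)
      exact ⟨(f u)⁻¹ • u, by simp [hu]⟩
    -- `g` is the projection onto `ℓ` along `w`: composing `F` with it gives `0`, and it is the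
    -- identity modulo `P`
    set g : Fin 3 → MvPolynomial (Fin 3) ℂ :=
      fun i => MvPolynomial.X i - P * MvPolynomial.C (w i) with hg
    have h0 : MvPolynomial.aeval g F = 0 := by
      apply MvPolynomial.funext
      intro z
      have h1 : MvPolynomial.eval z (MvPolynomial.aeval g F) =
          MvPolynomial.eval (z - f z • w) F := by
        have := MvPolynomial.comp_aeval_apply (R := ℂ) (f := g) (MvPolynomial.aeval z) F
        simp only [MvPolynomial.aeval_eq_eval] at this
        refine this.trans ?_
        congr 2
        funext i
        simp [hg, heval]
      rw [h1, map_zero]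
      apply hF
      rw [hmem, map_sub, map_smul, hw]
      simp
    have h2 : Ideal.Quotient.mkₐ ℂ (Ideal.span {P}) (MvPolynomial.aeval g F) =
        Ideal.Quotient.mkₐ ℂ (Ideal.span {P}) F := by
      have : (Ideal.Quotient.mkₐ ℂ (Ideal.span {P})).comp (MvPolynomial.aeval g) =
          Ideal.Quotient.mkₐ ℂ (Ideal.span {P}) := by
        apply MvPolynomial.algHom_ext
        intro i
        simp only [AlgHom.comp_apply, MvPolynomial.aeval_X, hg, map_sub, map_mul]
        have : Ideal.Quotient.mkₐ ℂ (Ideal.span {P}) P = 0 :=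
          Ideal.Quotient.eq_zero_iff_mem.2 (Ideal.mem_span_singleton_self P)
        rw [this, zero_mul, sub_zero]
      exact congrArg (fun f => f F) this
    rw [h0, map_zero] at h2
    exact Ideal.mem_span_singleton.1 (Ideal.Quotient.eq_zero_iff_mem.1 h2.symm)

/-- A nonzero polynomial splits as a product of powers of given linear forms times a cofactor divisible
by none of them. -/
lemma exists_factorization {ι : Type*} (s : Finset ι) (f : ι → MvPolynomial (Fin 3) ℂ)
    (hf0 : ∀ i ∈ s, f i ≠ 0) (hf : ∀ i ∈ s, (f i).IsHomogeneous 1)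
    (F : MvPolynomial (Fin 3) ℂ) (hF : F ≠ 0) :
    ∃ (a : ι → ℕ) (H : MvPolynomial (Fin 3) ℂ),
      F = (∏ i ∈ s, f i ^ a i) * H ∧ ∀ i ∈ s, ¬ f i ∣ H := by
  induction hn : F.totalDegree using Nat.strong_induction_on generalizing F with
  | _ n ih =>
    by_cases h : ∃ i ∈ s, f i ∣ F
    · obtain ⟨i, hi, G, rfl⟩ := h
      have hG : G ≠ 0 := right_ne_zero_of_mul hF
      rw [MvPolynomial.totalDegree_mul_of_isDomain (hf0 i hi) hG,
        (hf i hi).totalDegree (hf0 i hi)] at hn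
      obtain ⟨a, H, hGH, hH⟩ := ih G.totalDegree (by omega) G hG rfl
      refine ⟨fun j => (if j = i then 1 else 0) + a j, H, ?_, hH⟩
      simp only [pow_add, Finset.prod_mul_distrib]
      rw [mul_assoc, ← hGH]
      congr 1
      simp [Finset.prod_ite_eq', hi, pow_ite]
    · push Not at h
      exact ⟨0, F, by simp, h⟩

/-! ### Combinatorics of a multinet -/

/-- A multinet with classes `cls i`, multiplicities `m`, base locus `X`, base point multiplicities
`n` and degree `d`, together with a chosen equation `eqn ℓ` for each line. There are at least two
classes (`exists_ne`). The gcd of the multiplicities is not constrained. -/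
structure Multinet (k : ℕ) where
  cls : Fin k → Finset (Submodule ℂ (Fin 3 → ℂ))
  m : Submodule ℂ (Fin 3 → ℂ) → ℕ
  X : Finset (Submodule ℂ (Fin 3 → ℂ))
  n : Submodule ℂ (Fin 3 → ℂ) → ℕ
  d : ℕ
  eqn : Submodule ℂ (Fin 3 → ℂ) → MvPolynomial (Fin 3) ℂ
  exists_ne : ∀ i : Fin k, ∃ j, i ≠ j
  finrank_line : ∀ i, ∀ ℓ ∈ cls i, Module.finrank ℂ ℓ = 2
  nonempty : ∀ i, (cls i).Nonempty
  m_pos : ∀ i, ∀ ℓ ∈ cls i, 0 < m ℓ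
  finrank_pt : ∀ p ∈ X, Module.finrank ℂ p = 1
  sum_m : ∀ i, ∑ ℓ ∈ cls i, m ℓ = d
  inter_mem : ∀ i j, i ≠ j → ∀ ℓ ∈ cls i, ∀ ℓ' ∈ cls j, ℓ ⊓ ℓ' ∈ X
  sum_pt : ∀ p ∈ X, ∀ i, ∑ ℓ ∈ (cls i).filter (fun ℓ => p ≤ ℓ), m ℓ = n p
  conn : ∀ i, ∀ ℓ ∈ cls i, ∀ ℓ' ∈ cls i,
    Relation.ReflTransGen (fun a b => a ∈ cls i ∧ b ∈ cls i ∧ a ≠ b ∧ a ⊓ b ∉ X) ℓ ℓ'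
  isEquation : ∀ i, ∀ ℓ ∈ cls i, IsEquation ℓ (eqn ℓ)

namespace Multinet

variable {k : ℕ} (N : Multinet k)

lemma d_pos (i : Fin k) : 0 < N.d := by
  obtain ⟨ℓ, hℓ⟩ := N.nonempty i
  rw [← N.sum_m i]
  exact Finset.sum_pos (N.m_pos i) ⟨ℓ, hℓ⟩

lemma mem_line_iff {p ℓ : Submodule ℂ (Fin 3 → ℂ)} (hp : p ∈ N.X) {v : Fin 3 → ℂ}
    (hv : v ∈ p) (hv0 : v ≠ 0) : v ∈ ℓ ↔ p ≤ ℓ := by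
  refine ⟨fun h => ?_, fun h => h hv⟩
  have : p = Submodule.span ℂ {v} := eq_of_common_vector (N.finrank_pt p hp)
    (finrank_span_singleton hv0) hv0 hv (Submodule.mem_span_singleton_self v)
  rw [this]
  simpa using h

/-- The base points on a line of class `i` have total multiplicity `d`: each line `ℓ'` of another
class `j` meets `ℓ` in exactly one base point and contributes `m ℓ'` there. -/
lemma sum_n {i : Fin k} {ℓ : Submodule ℂ (Fin 3 → ℂ)} (hℓ : ℓ ∈ N.cls i) :
    ∑ p ∈ N.X with p ≤ ℓ, N.n p = N.d := by
  obtain ⟨j, hij⟩ := N.exists_ne i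
  have h1 : ∀ p ∈ N.X.filter (· ≤ ℓ), N.n p = ∑ ℓ' ∈ N.cls j, if p ≤ ℓ' then N.m ℓ' else 0 := by
    intro p hp
    rw [← N.sum_pt p (mem_filter.1 hp).1 j, Finset.sum_filter]
  rw [Finset.sum_congr rfl h1, Finset.sum_comm, ← N.sum_m j]
  refine Finset.sum_congr rfl fun ℓ' hℓ' => ?_
  have hX := N.inter_mem i j hij ℓ hℓ ℓ' hℓ'
  rw [Finset.sum_eq_single (ℓ ⊓ ℓ')]
  · simp
  · intro p hp hne
    rw [if_neg]
    intro hpl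
    rw [mem_filter] at hp
    refine hne (Submodule.eq_of_le_of_finrank_eq (le_inf hp.2 hpl) ?_)
    rw [N.finrank_pt p hp.1, N.finrank_pt _ hX]
  · intro h
    have hle : ℓ ⊓ ℓ' ≤ ℓ := inf_le_left
    exact absurd (mem_filter.2 ⟨hX, hle⟩) h

/-- The number of base points common to `ℓ` and `ℓ'`. For distinct lines it is `0` or `1`; for
`ℓ = ℓ'` it is the number of base points on `ℓ`. Thus `1 - common ℓ ℓ'` is the intersection number
of the strict transforms after blowing up `X`. -/
noncomputable def common (ℓ ℓ' : Submodule ℂ (Fin 3 → ℂ)) : ℕ := #{p ∈ N.X | p ≤ ℓ ∧ p ≤ ℓ'}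

lemma eq_inter {i : Fin k} {ℓ ℓ' p : Submodule ℂ (Fin 3 → ℂ)} (hℓ : ℓ ∈ N.cls i)
    (hℓ' : ℓ' ∈ N.cls i) (hne : ℓ ≠ ℓ') (hp : p ∈ N.X) (h : p ≤ ℓ) (h' : p ≤ ℓ') :
    p = ℓ ⊓ ℓ' := by
  apply Submodule.eq_of_le_of_finrank_le (le_inf h h')
  rw [N.finrank_pt p hp]
  by_contra hlt
  have h2 : Module.finrank ℂ ℓ = 2 := N.finrank_line i ℓ hℓ
  have h2' : Module.finrank ℂ ℓ' = 2 := N.finrank_line i ℓ' hℓ'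
  have e1 : ℓ ⊓ ℓ' = ℓ := Submodule.eq_of_le_of_finrank_le inf_le_left (by omega)
  have e2 : ℓ ⊓ ℓ' = ℓ' := Submodule.eq_of_le_of_finrank_le inf_le_right (by omega)
  exact hne (e1.symm.trans e2)

lemma common_le_one {i : Fin k} {ℓ ℓ' : Submodule ℂ (Fin 3 → ℂ)} (hℓ : ℓ ∈ N.cls i)
    (hℓ' : ℓ' ∈ N.cls i) (hne : ℓ ≠ ℓ') : N.common ℓ ℓ' ≤ 1 := by
  rw [common, Finset.card_le_one]
  intro p hp p' hp'
  rw [mem_filter] at hp hp'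
  rw [N.eq_inter hℓ hℓ' hne hp.1 hp.2.1 hp.2.2, N.eq_inter hℓ hℓ' hne hp'.1 hp'.2.1 hp'.2.2]

lemma common_eq_zero {i : Fin k} {ℓ ℓ' : Submodule ℂ (Fin 3 → ℂ)} (hℓ : ℓ ∈ N.cls i)
    (hℓ' : ℓ' ∈ N.cls i) (hne : ℓ ≠ ℓ') (hX : ℓ ⊓ ℓ' ∉ N.X) : N.common ℓ ℓ' = 0 := by
  rw [common, Finset.card_eq_zero, Finset.filter_eq_empty_iff]
  intro p hp hpl
  exact hX (N.eq_inter hℓ hℓ' hne hp hpl.1 hpl.2 ▸ hp)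

lemma sum_common (a : Submodule ℂ (Fin 3 → ℂ) → ℕ) (i : Fin k) (ℓ : Submodule ℂ (Fin 3 → ℂ)) :
    ∑ p ∈ N.X with p ≤ ℓ, ∑ ℓ' ∈ N.cls i with p ≤ ℓ', a ℓ' =
      ∑ ℓ' ∈ N.cls i, a ℓ' * N.common ℓ ℓ' := by
  simp_rw [Finset.sum_filter (s := N.cls i)]
  rw [Finset.sum_comm]
  refine Finset.sum_congr rfl fun ℓ' _ => ?_
  rw [← Finset.sum_filter, Finset.filter_filter, Finset.sum_const, smul_eq_mul, mul_comm]
  rfl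

/-- A form of Zariski's lemma. The matrix `1 - common` kills `m` and has nonnegative off-diagonal
entries, which are positive along the edges of the connectivity graph of the class. A vector `a` which
it sends to a nonpositive vector is therefore proportional to `m`: the minimum of `a / m` propagates
along edges to the whole class. -/
lemma proportional {i : Fin k} (a : Submodule ℂ (Fin 3 → ℂ) → ℕ)
    (ha : ∀ ℓ ∈ N.cls i, ∑ ℓ' ∈ N.cls i, a ℓ' ≤ ∑ ℓ' ∈ N.cls i, a ℓ' * N.common ℓ ℓ')
    {ℓ ℓ' : Submodule ℂ (Fin 3 → ℂ)} (hℓ : ℓ ∈ N.cls i) (hℓ' : ℓ' ∈ N.cls i) :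
    a ℓ * N.m ℓ' = a ℓ' * N.m ℓ := by
  have hm : ∀ ℓ ∈ N.cls i,
      ∑ ℓ' ∈ N.cls i, N.m ℓ' * N.common ℓ ℓ' = ∑ ℓ' ∈ N.cls i, N.m ℓ' := by
    intro ℓ hℓ
    rw [← N.sum_common N.m i ℓ, N.sum_m i, ← N.sum_n hℓ]
    exact Finset.sum_congr rfl fun p hp => N.sum_pt p (mem_filter.1 hp).1 i
  have step : ∀ b c, (b ∈ N.cls i ∧ c ∈ N.cls i ∧ b ≠ c ∧ b ⊓ c ∉ N.X) →
      (∀ x ∈ N.cls i, a b * N.m x ≤ a x * N.m b) → (∀ x ∈ N.cls i, a c * N.m x ≤ a x * N.m c) := by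
    rintro b c ⟨hb, hc, hbc, hX⟩ hmin
    have h1 : (0 : ℤ) ≤ ∑ x ∈ N.cls i, ((a x : ℤ) * N.m b - a b * N.m x) * (N.common b x - 1) := by
      have e1 : ∑ x ∈ N.cls i, ((a x : ℤ) * N.m b - a b * N.m x) * (N.common b x - 1) =
          N.m b * (∑ x ∈ N.cls i, (a x : ℤ) * N.common b x - ∑ x ∈ N.cls i, (a x : ℤ)) -
          a b * (∑ x ∈ N.cls i, (N.m x : ℤ) * N.common b x - ∑ x ∈ N.cls i, (N.m x : ℤ)) := by
        simp only [← Finset.sum_sub_distrib, Finset.mul_sum]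
        refine Finset.sum_congr rfl fun x _ => ?_
        ring
      have e2 : ∑ x ∈ N.cls i, (N.m x : ℤ) * N.common b x - ∑ x ∈ N.cls i, (N.m x : ℤ) = 0 := by
        rw [sub_eq_zero]; exact_mod_cast hm b hb
      have e3 : 0 ≤ ∑ x ∈ N.cls i, (a x : ℤ) * N.common b x - ∑ x ∈ N.cls i, (a x : ℤ) := by
        rw [sub_nonneg]; exact_mod_cast ha b hb
      rw [e1, e2]
      simp only [mul_zero, sub_zero]
      positivity
    have hterm : ∀ x ∈ N.cls i,
        ((a x : ℤ) * N.m b - a b * N.m x) * (N.common b x - 1) ≤ 0 := by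
      intro x hx
      by_cases hxb : b = x
      · subst hxb; simp
      · have h2 : (0 : ℤ) ≤ (a x : ℤ) * N.m b - a b * N.m x := by
          rw [sub_nonneg]; exact_mod_cast hmin x hx
        have h3 : (N.common b x : ℤ) - 1 ≤ 0 := by
          have := N.common_le_one hb hx hxb
          omega
        exact mul_nonpos_of_nonneg_of_nonpos h2 h3
    have hz := (Finset.sum_eq_zero_iff_of_nonpos hterm).1
      (le_antisymm (Finset.sum_nonpos hterm) h1) c hc
    rw [N.common_eq_zero hb hc hbc hX] at hz
    have heq : a c * N.m b = a b * N.m c := by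
      have : (a c : ℤ) * N.m b = a b * N.m c := by push_cast at hz; linarith
      exact_mod_cast this
    intro x hx
    apply Nat.le_of_mul_le_mul_left _ (N.m_pos i b hb)
    calc N.m b * (a c * N.m x) = (a c * N.m b) * N.m x := by ring
      _ = (a b * N.m x) * N.m c := by rw [heq]; ring
      _ ≤ (a x * N.m b) * N.m c := Nat.mul_le_mul_right _ (hmin x hx)
      _ = N.m b * (a x * N.m c) := by ring
  obtain ⟨b, hb, hbmin⟩ := Finset.exists_min_image (N.cls i)
    (fun x => (a x : ℚ) / N.m x) (N.nonempty i)
  have hb' : ∀ x ∈ N.cls i, a b * N.m x ≤ a x * N.m b := by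
    intro x hx
    have := hbmin x hx
    rw [div_le_div_iff₀ (by exact_mod_cast N.m_pos i b hb) (by exact_mod_cast N.m_pos i x hx)]
      at this
    exact_mod_cast this
  have hall : ∀ c ∈ N.cls i, ∀ x ∈ N.cls i, a c * N.m x ≤ a x * N.m c := by
    intro c hc
    induction N.conn i b hb c hc with
    | refl => exact hb'
    | tail _ hr ih => exact step _ _ hr (ih hr.1)
  have hge := hall ℓ' hℓ' ℓ hℓ
  exact (hall ℓ hℓ ℓ' hℓ').antisymm hge

/-! ### The graded ring of a multinet -/

/-- The degree `r` piece of the ring `R`: the forms `F` of degree `r` whose multiplicity at every base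
point `p` is at least `r * n p / d`. The condition is phrased by vanishing of Taylor coefficients, so
that it also holds for `F = 0`; see `mem_R_iff` for the version with `ordAt`. -/
noncomputable def R (r : ℕ) : Submodule ℂ (MvPolynomial (Fin 3) ℂ) where
  carrier := {F | F.IsHomogeneous r ∧ ∀ p ∈ N.X, ∀ v ∈ p, v ≠ 0 →
    ∀ j, N.d * j < r * N.n p → (taylorAt v F).coeff j = 0}
  zero_mem' := ⟨MvPolynomial.isHomogeneous_zero _ _ _, by simp⟩
  add_mem' := by
    rintro F G ⟨hF, hF'⟩ ⟨hG, hG'⟩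
    refine ⟨hF.add hG, fun p hp v hv hv0 j hj => ?_⟩
    rw [map_add, Polynomial.coeff_add, hF' p hp v hv hv0 j hj, hG' p hp v hv hv0 j hj, add_zero]
  smul_mem' := by
    rintro c F ⟨hF, hF'⟩
    refine ⟨?_, fun p hp v hv hv0 j hj => ?_⟩
    · rw [MvPolynomial.smul_eq_C_mul]
      exact hF.C_mul c
    · rw [map_smul, Polynomial.coeff_smul, hF' p hp v hv hv0 j hj, smul_zero]

lemma mem_R_iff {r : ℕ} {F : MvPolynomial (Fin 3) ℂ} (hF : F ≠ 0) :
    F ∈ N.R r ↔ F.IsHomogeneous r ∧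
      ∀ p ∈ N.X, ∀ v ∈ p, v ≠ 0 → r * N.n p ≤ N.d * ordAt v F := by
  refine and_congr_right fun _ => forall₄_congr fun p _ v _ => forall_congr' fun _ => ?_
  constructor
  · intro h
    by_contra hlt
    push Not at hlt
    have := h _ hlt
    rw [ordAt] at this
    exact Polynomial.trailingCoeff_nonzero_iff_nonzero.2 (taylorAt_ne_zero v hF) this
  · intro h j hj
    apply Polynomial.coeff_eq_zero_of_lt_natTrailingDegree
    exact Nat.lt_of_mul_lt_mul_left (hj.trans_le h)

lemma mul_mem_R {r s : ℕ} {F G : MvPolynomial (Fin 3) ℂ} (hF : F ∈ N.R r) (hG : G ∈ N.R s) :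
    F * G ∈ N.R (r + s) := by
  by_cases hF0 : F = 0
  · simp [hF0]
  by_cases hG0 : G = 0
  · simp [hG0]
  rw [N.mem_R_iff hF0] at hF
  rw [N.mem_R_iff hG0] at hG
  rw [N.mem_R_iff (mul_ne_zero hF0 hG0)]
  refine ⟨hF.1.mul hG.1, fun p hp v hv hv0 => ?_⟩
  rw [ordAt_mul v hF0 hG0, add_mul, mul_add]
  exact add_le_add (hF.2 p hp v hv hv0) (hG.2 p hp v hv hv0)

lemma one_mem_R : (1 : MvPolynomial (Fin 3) ℂ) ∈ N.R 0 :=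
  (N.mem_R_iff one_ne_zero).2 ⟨MvPolynomial.isHomogeneous_one _ _, by simp⟩

instance finite_R (r : ℕ) : Module.Finite ℂ (N.R r) := by
  have hle : N.R r ≤ MvPolynomial.restrictTotalDegree (Fin 3) ℂ r := fun F hF => by
    rw [MvPolynomial.mem_restrictTotalDegree]
    exact hF.1.totalDegree_le
  exact Submodule.finiteDimensional_of_le hle

/-- An element of `R` vanishing at one point of a line of the arrangement outside the base locus
vanishes on the whole line. Otherwise Bézout would give `r ≥ 1 + ∑ r * n p / d = 1 + r`. -/
lemma vanish_of_eval_eq_zero {r : ℕ} {F : MvPolynomial (Fin 3) ℂ} (hF : F ∈ N.R r) {i : Fin k}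
    {ℓ : Submodule ℂ (Fin 3 → ℂ)} (hℓ : ℓ ∈ N.cls i) {y : Fin 3 → ℂ} (hy : y ∈ ℓ) (hy0 : y ≠ 0)
    (hyX : ∀ p ∈ N.X, y ∉ p) (hFy : MvPolynomial.eval y F = 0) :
    ∀ z ∈ ℓ, MvPolynomial.eval z F = 0 := by
  intro z hz
  by_contra hFz
  have hFhom := hF.1
  have hF0 : F ≠ 0 := by rintro rfl; simp at hFz
  have hd := N.d_pos i
  have hz0 : z ≠ 0 := by
    rintro rfl
    apply hFz
    rw [← zero_smul ℂ y, homogeneous_eval_smul hFhom, hFy, mul_zero]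
  have hspan : Submodule.span ℂ {y} ∉ N.X := fun h =>
    hyX _ h (Submodule.mem_span_singleton_self y)
  have hP : Submodule.span ℂ {y} ∉ N.X.filter (· ≤ ℓ) := fun h => hspan (mem_filter.1 h).1
  have hneP : ∀ p ∈ N.X.filter (· ≤ ℓ), ¬ p = Submodule.span ℂ {y} := by
    rintro p hp rfl
    exact hP hp
  have key := sum_orders_le (n := r) hFhom.totalDegree_le (N.finrank_line i ℓ hℓ)
    (insert (Submodule.span ℂ {y}) (N.X.filter (· ≤ ℓ)))
    (by
      intro p hp
      rcases mem_insert.1 hp with rfl | hp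
      · exact finrank_span_singleton hy0
      · exact N.finrank_pt p (mem_filter.1 hp).1)
    (by
      intro p hp
      rcases mem_insert.1 hp with rfl | hp
      · simpa using hy
      · exact (mem_filter.1 hp).2)
    (fun p => if p = Submodule.span ℂ {y} then 1 else (r * N.n p) ⌈/⌉ N.d)
    (by
      intro p hp v hv hv0
      rcases mem_insert.1 hp with rfl | hp
      · obtain ⟨c, rfl⟩ := Submodule.mem_span_singleton.1 hv
        rw [if_pos rfl, pow_one, Polynomial.X_dvd_iff, taylorAt_coeff_zero,
          homogeneous_eval_smul hFhom, hFy, mul_zero, map_zero]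
      · rw [if_neg (hneP p hp)]
        apply X_pow_dvd_taylorAt
        rw [ceilDiv_le_iff_le_mul hd]
        exact ((N.mem_R_iff hF0).1 hF).2 p (mem_filter.1 hp).1 v hv hv0)
    hz hz0 hFz
  rw [Finset.sum_insert hP, if_pos rfl, Finset.sum_congr rfl
    (fun p hp => if_neg (hneP p hp))] at key
  have h2 : r * N.d ≤ N.d * ∑ p ∈ N.X with p ≤ ℓ, (r * N.n p) ⌈/⌉ N.d := by
    rw [← N.sum_n hℓ, Finset.mul_sum, N.sum_n hℓ, Finset.mul_sum]
    exact Finset.sum_le_sum fun p _ => (ceilDiv_le_iff_le_mul hd).1 le_rfl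
  rw [mul_comm r] at h2
  have := Nat.le_of_mul_le_mul_left h2 hd
  omega

/-- The exponent of class `i`: the gcd of its multiplicities. -/
noncomputable def e (i : Fin k) : ℕ := (N.cls i).gcd N.m

/-- The degree `d / e i` of the primitive curve `D i`. -/
noncomputable def q (i : Fin k) : ℕ := ∑ ℓ ∈ N.cls i, N.m ℓ / N.e i

/-- The primitive curve of class `i`: the completely reducible fibre of the pencil attached to the
class, divided by its multiplicity `e i`. -/
noncomputable def D (i : Fin k) : MvPolynomial (Fin 3) ℂ :=
  ∏ ℓ ∈ N.cls i, N.eqn ℓ ^ (N.m ℓ / N.e i)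

lemma e_dvd {i : Fin k} {ℓ : Submodule ℂ (Fin 3 → ℂ)} (hℓ : ℓ ∈ N.cls i) : N.e i ∣ N.m ℓ :=
  Finset.gcd_dvd hℓ

lemma e_mul_q (i : Fin k) : N.e i * N.q i = N.d := by
  rw [q, Finset.mul_sum, ← N.sum_m i]
  exact Finset.sum_congr rfl fun ℓ hℓ => Nat.mul_div_cancel' (N.e_dvd hℓ)

lemma e_pos (i : Fin k) : 0 < N.e i :=
  Nat.pos_of_mul_pos_right (N.e_mul_q i ▸ N.d_pos i)

lemma q_pos (i : Fin k) : 0 < N.q i :=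
  Nat.pos_of_mul_pos_left (N.e_mul_q i ▸ N.d_pos i)

lemma D_ne_zero (i : Fin k) : N.D i ≠ 0 :=
  prod_ne_zero_iff.2 fun ℓ hℓ => pow_ne_zero _ (N.isEquation i ℓ hℓ).ne_zero

lemma prod_homogeneous (i : Fin k) (a : Submodule ℂ (Fin 3 → ℂ) → ℕ) :
    (∏ ℓ ∈ N.cls i, N.eqn ℓ ^ a ℓ).IsHomogeneous (∑ ℓ ∈ N.cls i, a ℓ) := by
  apply MvPolynomial.IsHomogeneous.prod
  intro ℓ hℓ
  simpa using (N.isEquation i ℓ hℓ).homogeneous.pow (a ℓ)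

lemma ordAt_prod_eqn (i : Fin k) (a : Submodule ℂ (Fin 3 → ℂ) → ℕ)
    {p : Submodule ℂ (Fin 3 → ℂ)} (hp : p ∈ N.X) {v : Fin 3 → ℂ} (hv : v ∈ p) (hv0 : v ≠ 0) :
    ordAt v (∏ ℓ ∈ N.cls i, N.eqn ℓ ^ a ℓ) = ∑ ℓ ∈ N.cls i with p ≤ ℓ, a ℓ := by
  rw [ordAt_prod v _ _ fun ℓ hℓ => pow_ne_zero _ (N.isEquation i ℓ hℓ).ne_zero, Finset.sum_filter]
  refine Finset.sum_congr rfl fun ℓ hℓ => ?_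
  rw [ordAt_pow v (N.isEquation i ℓ hℓ).ne_zero, (N.isEquation i ℓ hℓ).ord_eq,
    N.mem_line_iff hp hv hv0]
  split_ifs <;> simp

lemma d_mul_ordAt_D (i : Fin k) {p : Submodule ℂ (Fin 3 → ℂ)} (hp : p ∈ N.X) {v : Fin 3 → ℂ}
    (hv : v ∈ p) (hv0 : v ≠ 0) : N.d * ordAt v (N.D i) = N.q i * N.n p := by
  rw [D, N.ordAt_prod_eqn i _ hp hv hv0, ← N.sum_pt p hp i, ← N.e_mul_q i, mul_comm (N.e i),
    mul_assoc, Finset.mul_sum (a := N.e i)]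
  congr 1
  exact Finset.sum_congr rfl fun ℓ hℓ => Nat.mul_div_cancel' (N.e_dvd (mem_filter.1 hℓ).1)

lemma D_mem_R (i : Fin k) : N.D i ∈ N.R (N.q i) :=
  (N.mem_R_iff (N.D_ne_zero i)).2 ⟨N.prod_homogeneous i _, fun _ hp _ hv hv0 =>
    (N.d_mul_ordAt_D i hp hv hv0).ge⟩

/-- Since `D i` has the smallest multiplicities allowed in `R`, a quotient by it stays in `R`. -/
lemma exists_quotient {i : Fin k} {r : ℕ} {G : MvPolynomial (Fin 3) ℂ} (hG : G ≠ 0)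
    (h : N.D i * G ∈ N.R r) : ∃ s, r = N.q i + s ∧ G ∈ N.R s := by
  have hD := N.D_ne_zero i
  rw [N.mem_R_iff (mul_ne_zero hD hG)] at h
  obtain ⟨s, rfl, hs⟩ := homogeneous_of_mul (N.prod_homogeneous i _) hD hG h.1
  refine ⟨s, rfl, (N.mem_R_iff hG).2 ⟨hs, fun p hp v hv hv0 => ?_⟩⟩
  have := h.2 p hp v hv hv0
  rw [ordAt_mul v hD hG, mul_add, N.d_mul_ordAt_D i hp hv hv0, add_mul] at this
  exact Nat.le_of_add_le_add_left this

/-- An element of `R` containing one line of class `i` is divisible by `D i`. -/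
lemma D_dvd {i : Fin k} {r : ℕ} {F : MvPolynomial (Fin 3) ℂ} (hF : F ∈ N.R r)
    {ℓ₀ : Submodule ℂ (Fin 3 → ℂ)} (hℓ₀ : ℓ₀ ∈ N.cls i)
    (hvan : ∀ z ∈ ℓ₀, MvPolynomial.eval z F = 0) : N.D i ∣ F := by
  by_cases hF0 : F = 0
  · simp [hF0]
  obtain ⟨a, H, hFH, hH⟩ := exists_factorization (N.cls i) N.eqn
    (fun ℓ hℓ => (N.isEquation i ℓ hℓ).ne_zero) (fun ℓ hℓ => (N.isEquation i ℓ hℓ).homogeneous) F hF0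
  have hd := N.d_pos i
  have hH0 : H ≠ 0 := by rintro rfl; simp at hFH; exact hF0 hFH
  have hprod0 : ∏ ℓ ∈ N.cls i, N.eqn ℓ ^ a ℓ ≠ 0 :=
    prod_ne_zero_iff.2 fun ℓ hℓ => pow_ne_zero _ (N.isEquation i ℓ hℓ).ne_zero
  rw [N.mem_R_iff hF0] at hF
  obtain ⟨s, rfl, hs⟩ := homogeneous_of_mul (N.prod_homogeneous i a) hprod0 hH0 (hFH ▸ hF.1)
  set A : ℕ := ∑ ℓ ∈ N.cls i, a ℓ with hA
  -- Bézout for `H` and `ℓ`, using that `H` has multiplicity at least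
  -- `(A + s) * n p / d` minus the contribution of the split-off lines at each base point
  have hineq : ∀ ℓ ∈ N.cls i, ∑ ℓ' ∈ N.cls i, a ℓ' ≤ ∑ ℓ' ∈ N.cls i, a ℓ' * N.common ℓ ℓ' := by
    intro ℓ hℓ
    obtain ⟨z, hz, hz0, hHz⟩ : ∃ z ∈ ℓ, z ≠ 0 ∧ MvPolynomial.eval z H ≠ 0 := by
      by_contra hcon
      push Not at hcon
      apply hH ℓ hℓ
      apply (N.isEquation i ℓ hℓ).dvd
      intro z hz
      by_cases hz0 : z = 0
      · obtain ⟨u, hu, hu0, -⟩ := exists_avoiding (N.finrank_line i ℓ hℓ) ∅ (by simp)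
        rw [hz0, ← zero_smul ℂ u, homogeneous_eval_smul hs, hcon u hu hu0, mul_zero]
      · exact hcon z hz hz0
    have key := sum_orders_le (n := s) hs.totalDegree_le (N.finrank_line i ℓ hℓ)
      (N.X.filter (· ≤ ℓ)) (fun p hp => N.finrank_pt p (mem_filter.1 hp).1)
      (fun p hp => (mem_filter.1 hp).2)
      (fun p => ((A + s) * N.n p) ⌈/⌉ N.d - ∑ ℓ' ∈ N.cls i with p ≤ ℓ', a ℓ')
      (by
        intro p hp v hv hv0
        apply X_pow_dvd_taylorAt
        rw [Nat.sub_le_iff_le_add', ceilDiv_le_iff_le_mul hd]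
        have := hF.2 p (mem_filter.1 hp).1 v hv hv0
        rwa [hFH, ordAt_mul v hprod0 hH0, N.ordAt_prod_eqn i a (mem_filter.1 hp).1 hv hv0] at this)
      hz hz0 hHz
    rw [← N.sum_common a i ℓ]
    have h2 : (A + s) * N.d ≤ N.d * ∑ p ∈ N.X with p ≤ ℓ,
        ((((A + s) * N.n p) ⌈/⌉ N.d - ∑ ℓ' ∈ N.cls i with p ≤ ℓ', a ℓ') +
          ∑ ℓ' ∈ N.cls i with p ≤ ℓ', a ℓ') := by
      conv_lhs => rw [← N.sum_n hℓ, Finset.mul_sum]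
      rw [Finset.mul_sum]
      refine Finset.sum_le_sum fun p _ => (ceilDiv_le_iff_le_mul hd).1 ?_
      omega
    rw [mul_comm (A + s)] at h2
    have h3 := Nat.le_of_mul_le_mul_left h2 hd
    rw [Finset.sum_add_distrib] at h3
    omega
  have hprop := fun ℓ hℓ ℓ' hℓ' => N.proportional (i := i) a hineq (ℓ := ℓ) (ℓ' := ℓ') hℓ hℓ'
  have ha0 : a ℓ₀ ≠ 0 := by
    intro h0
    have hdvd := (N.isEquation i ℓ₀ hℓ₀).dvd F hvan
    -- by proportionality all exponents vanish, so `F = H` is not divisible by the equation of `ℓ₀`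
    have hz : ∀ ℓ ∈ N.cls i, a ℓ = 0 := by
      intro ℓ hℓ
      have := hprop ℓ hℓ ℓ₀ hℓ₀
      rw [h0, zero_mul] at this
      exact (Nat.mul_eq_zero.1 this).resolve_right (N.m_pos i ℓ₀ hℓ₀).ne'
    rw [hFH, Finset.prod_congr rfl fun ℓ hℓ => by rw [hz ℓ hℓ, pow_zero], Finset.prod_const_one,
      one_mul] at hdvd
    exact hH ℓ₀ hℓ₀ hdvd
  -- `a` is a positive integral vector proportional to `m`, hence a positive multiple of `m / e i`
  have hle : ∀ ℓ ∈ N.cls i, N.m ℓ / N.e i ≤ a ℓ := by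
    intro ℓ hℓ
    have hpos : 0 < a ℓ := by
      have h := hprop ℓ hℓ ℓ₀ hℓ₀
      have : 0 < a ℓ₀ * N.m ℓ := Nat.mul_pos (Nat.pos_of_ne_zero ha0) (N.m_pos i ℓ hℓ)
      rw [← h] at this
      exact Nat.pos_of_mul_pos_right this
    have h1 : N.m ℓ ∣ a ℓ * N.e i := by
      have : (N.cls i).gcd (fun ℓ' => a ℓ * N.m ℓ') = a ℓ * N.e i := by
        rw [Finset.gcd_mul_left]; simp [e]
      rw [← this]
      refine Finset.dvd_gcd fun ℓ' hℓ' => ?_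
      rw [hprop ℓ hℓ ℓ' hℓ']
      exact dvd_mul_left _ _
    refine Nat.le_of_dvd hpos ?_
    apply Nat.dvd_of_mul_dvd_mul_right (N.e_pos i)
    rwa [Nat.div_mul_cancel (N.e_dvd hℓ)]
  rw [hFH]
  exact Dvd.dvd.mul_right (Finset.prod_dvd_prod_of_dvd _ _ fun ℓ hℓ => pow_dvd_pow _ (hle ℓ hℓ)) _

/-! ### The Hilbert function -/

/-- The semigroup of degrees of elements of `R` not vanishing at `y`. -/
def S (y : Fin 3 → ℂ) : Set ℕ := {r | ∃ F ∈ N.R r, MvPolynomial.eval y F ≠ 0}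

/-- `y` is a nonzero vector spanning a point outside the base locus, on some line of class `i`. -/
def IsTestPoint (i : Fin k) (y : Fin 3 → ℂ) : Prop :=
  ∃ ℓ ∈ N.cls i, y ∈ ℓ ∧ y ≠ 0 ∧ ∀ p ∈ N.X, y ∉ p

lemma exists_testPoint (i : Fin k) : ∃ y, N.IsTestPoint i y := by
  obtain ⟨ℓ, hℓ⟩ := N.nonempty i
  obtain ⟨y, hy⟩ := exists_avoiding (N.finrank_line i ℓ hℓ) N.X N.finrank_pt
  exact ⟨y, ℓ, hℓ, hy⟩

lemma zero_mem_S (y : Fin 3 → ℂ) : 0 ∈ N.S y := ⟨1, N.one_mem_R, by simp⟩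

lemma add_mem_S (y : Fin 3 → ℂ) : ∀ r ∈ N.S y, ∀ s ∈ N.S y, r + s ∈ N.S y := by
  rintro r ⟨F, hF, hFy⟩ s ⟨G, hG, hGy⟩
  exact ⟨F * G, N.mul_mem_R hF hG, by rw [map_mul]; exact mul_ne_zero hFy hGy⟩

lemma eval_D_self {i : Fin k} {y : Fin 3 → ℂ} (hy : N.IsTestPoint i y) :
    MvPolynomial.eval y (N.D i) = 0 := by
  obtain ⟨ℓ, hℓ, hyℓ, -, -⟩ := hy
  rw [D, map_prod]
  refine Finset.prod_eq_zero hℓ ?_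
  rw [map_pow, ((N.isEquation i ℓ hℓ).mem_iff y).1 hyℓ]
  exact zero_pow (Nat.div_pos (Nat.le_of_dvd (N.m_pos i ℓ hℓ) (N.e_dvd hℓ)) (N.e_pos i)).ne'

lemma q_mem_S {i j : Fin k} (hij : i ≠ j) {y : Fin 3 → ℂ} (hy : N.IsTestPoint i y) :
    N.q j ∈ N.S y := by
  obtain ⟨ℓ, hℓ, hyℓ, -, hyX⟩ := hy
  refine ⟨N.D j, N.D_mem_R j, ?_⟩
  rw [D, map_prod, prod_ne_zero_iff]
  intro ℓ' hℓ'
  rw [map_pow]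
  refine pow_ne_zero _ fun h => ?_
  exact hyX _ (N.inter_mem i j hij ℓ hℓ ℓ' hℓ') ⟨hyℓ, ((N.isEquation j ℓ' hℓ').mem_iff y).2 h⟩

lemma setGcd_pos {i : Fin k} {y : Fin 3 → ℂ} (hy : N.IsTestPoint i y) :
    0 < Nat.setGcd (N.S y) := by
  obtain ⟨j, hij⟩ := N.exists_ne i
  exact Nat.pos_of_dvd_of_pos (Nat.setGcd_dvd_of_mem (N.q_mem_S hij hy)) (N.q_pos j)

/-- The kernel of evaluation at a test point of class `i` is `D i * R`. -/
lemma exists_eq_D_mul {i : Fin k} {y : Fin 3 → ℂ} (hy : N.IsTestPoint i y) {r : ℕ}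
    {F : MvPolynomial (Fin 3) ℂ} (hF : F ∈ N.R r) (hF0 : F ≠ 0)
    (hFy : MvPolynomial.eval y F = 0) :
    ∃ s G, r = N.q i + s ∧ G ∈ N.R s ∧ G ≠ 0 ∧ F = N.D i * G := by
  obtain ⟨ℓ, hℓ, hyℓ, hy0, hyX⟩ := hy
  obtain ⟨G, rfl⟩ := N.D_dvd hF hℓ (N.vanish_of_eval_eq_zero hF hℓ hyℓ hy0 hyX hFy)
  have hG := right_ne_zero_of_mul hF0
  obtain ⟨s, hs, hGs⟩ := N.exists_quotient hG hF
  exact ⟨s, G, hs, hGs, hG, rfl⟩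

/-- The recurrence for the Hilbert function of `R`, from evaluation at `y`: the image is all of `ℂ` or
zero, and the kernel is `D i` times the piece of degree `r - q i`. -/
lemma finrank_R {i : Fin k} {y : Fin 3 → ℂ} (hy : N.IsTestPoint i y) (r : ℕ) :
    Module.finrank ℂ (N.R r) = (if r ∈ N.S y then 1 else 0) +
      (if N.q i ≤ r then Module.finrank ℂ (N.R (r - N.q i)) else 0) := by
  let ev : N.R r →ₗ[ℂ] ℂ := (MvPolynomial.aeval (R := ℂ) y).toLinearMap ∘ₗ (N.R r).subtype
  have hev : ∀ F : N.R r, ev F = MvPolynomial.eval y (F : MvPolynomial (Fin 3) ℂ) := fun F => by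
    simp [ev, MvPolynomial.aeval_eq_eval]
  rw [← LinearMap.finrank_range_add_finrank_ker ev]
  congr 1
  · split_ifs with h
    · obtain ⟨F, hF, hFy⟩ := h
      have : LinearMap.range ev = ⊤ := by
        rw [LinearMap.range_eq_top]
        apply LinearMap.surjective
        intro h0
        exact hFy (by rw [← hev ⟨F, hF⟩, h0, LinearMap.zero_apply])
      rw [this, finrank_top, Module.finrank_self]
    · have : ev = 0 := by
        refine LinearMap.ext fun F => ?_
        rw [hev, LinearMap.zero_apply]
        by_contra hF
        exact h ⟨F, F.2, hF⟩
      rw [this, LinearMap.range_zero, finrank_bot]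
  · split_ifs with h
    · let mulD : N.R (r - N.q i) →ₗ[ℂ] LinearMap.ker ev :=
        { toFun := fun G => ⟨⟨N.D i * G, by
              have := N.mul_mem_R (N.D_mem_R i) G.2
              rwa [Nat.add_sub_cancel' h] at this⟩, by
              rw [LinearMap.mem_ker, hev, map_mul, N.eval_D_self hy, zero_mul]⟩
          map_add' := fun G G' => by
            ext1; ext1; exact mul_add _ _ _
          map_smul' := fun c G => by
            ext1; ext1; exact mul_smul_comm _ _ _ }
      refine (LinearEquiv.finrank_eq (LinearEquiv.ofBijective mulD ⟨?_, ?_⟩)).symm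
      · intro G G' hGG'
        have : N.D i * (G : MvPolynomial (Fin 3) ℂ) = N.D i * G' :=
          congrArg (fun F : LinearMap.ker ev => ((F : N.R r) : MvPolynomial (Fin 3) ℂ)) hGG'
        exact Subtype.ext (mul_left_cancel₀ (N.D_ne_zero i) this)
      · rintro ⟨⟨F, hF⟩, hFy⟩
        rw [LinearMap.mem_ker, hev] at hFy
        by_cases hF0 : F = 0
        · refine ⟨0, ?_⟩
          ext1; ext1
          rw [map_zero]
          exact hF0.symm
        · obtain ⟨s, G, hs, hG, -, hFG⟩ := N.exists_eq_D_mul hy hF hF0 hFy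
          have hs' : s = r - N.q i := by omega
          subst hs'
          refine ⟨⟨G, hG⟩, ?_⟩
          ext1; ext1
          exact hFG.symm
    · rw [Submodule.finrank_eq_zero, LinearMap.ker_eq_bot']
      rintro ⟨F, hF⟩ hFy
      rw [hev] at hFy
      by_contra hF0
      obtain ⟨s, G, hs, -⟩ := N.exists_eq_D_mul hy hF (fun h0 => hF0 (Subtype.ext h0)) hFy
      omega

/-- Dividing by `D i` until the value at `y` is nonzero writes every degree occurring in `R` as a
multiple of `q i` plus an element of `S y`. -/
lemma gcd_dvd_weight {i : Fin k} {y : Fin 3 → ℂ} (hy : N.IsTestPoint i y) (r : ℕ) :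
    ∀ F ∈ N.R r, F ≠ 0 → Nat.gcd (Nat.setGcd (N.S y)) (N.q i) ∣ r := by
  induction r using Nat.strong_induction_on with
  | _ r ih =>
    intro F hF hF0
    by_cases hFy : MvPolynomial.eval y F = 0
    · obtain ⟨s, G, rfl, hG, hG0, -⟩ := N.exists_eq_D_mul hy hF hF0 hFy
      have := N.q_pos i
      exact dvd_add (Nat.gcd_dvd_right _ _) (ih s (by omega) G hG hG0)
    · exact (Nat.gcd_dvd_left _ _).trans (Nat.setGcd_dvd_of_mem ⟨F, hF, hFy⟩)

lemma gcd_dvd_gcd {i j : Fin k} {y y' : Fin 3 → ℂ} (hy : N.IsTestPoint i y) :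
    Nat.gcd (Nat.setGcd (N.S y)) (N.q i) ∣ Nat.gcd (Nat.setGcd (N.S y')) (N.q j) := by
  apply Nat.dvd_gcd
  · rw [Nat.dvd_setGcd_iff]
    rintro r ⟨F, hF, hFy⟩
    exact N.gcd_dvd_weight hy r F hF (by rintro rfl; simp at hFy)
  · exact N.gcd_dvd_weight hy _ _ (N.D_mem_R j) (N.D_ne_zero j)

/-- The growth rate of the Hilbert function determines `lcm (gcd (S y)) (q i)`, so this number is
the same for all classes. -/
lemma lcm_le_lcm {i j : Fin k} {y y' : Fin 3 → ℂ} (hy : N.IsTestPoint i y)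
    (hy' : N.IsTestPoint j y') :
    Nat.lcm (Nat.setGcd (N.S y')) (N.q j) ≤ Nat.lcm (Nat.setGcd (N.S y)) (N.q i) := by
  obtain ⟨K, hK⟩ := hilbert_bounds _ _ (N.zero_mem_S y) (N.add_mem_S y) _ (N.q_pos i)
    (N.setGcd_pos hy) (N.finrank_R hy)
  obtain ⟨_, hJ⟩ := hilbert_bounds _ _ (N.zero_mem_S y') (N.add_mem_S y') _ (N.q_pos j)
    (N.setGcd_pos hy') (N.finrank_R hy')
  exact hilbert_lcm_le (fun r => Module.finrank ℂ (N.R r)) _ _ K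
    (fun u => (hK u).1) (fun u => (hJ u).2)

/-! ### Conclusion -/

/-- The gcd of two exponents is the same for all pairs of distinct classes. -/
lemma exists_gcd_const (i₀ : Fin k) :
    ∃ Λ, 0 < Λ ∧ ∀ i j, i ≠ j → N.d = Λ * Nat.gcd (N.e i) (N.e j) := by
  choose y hy using N.exists_testPoint
  refine ⟨Nat.lcm (Nat.setGcd (N.S (y i₀))) (N.q i₀),
    Nat.lcm_pos (N.setGcd_pos (hy i₀)) (N.q_pos i₀), fun i j hij => ?_⟩
  refine gcd_arith (Nat.gcd_pos_of_pos_right _ (N.q_pos i)) rfl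
    (Nat.dvd_antisymm (N.gcd_dvd_gcd (hy j)) (N.gcd_dvd_gcd (hy i)))
    (le_antisymm (N.lcm_le_lcm (hy i₀) (hy i)) (N.lcm_le_lcm (hy i) (hy i₀)))
    (le_antisymm (N.lcm_le_lcm (hy i₀) (hy j)) (N.lcm_le_lcm (hy j) (hy i₀)))
    (N.e_mul_q i) (N.e_mul_q j)
    (Nat.setGcd_dvd_of_mem (N.q_mem_S hij.symm (hy j)))

end Multinet

/-- For a multinet whose multiplicities have greatest common divisor 1,
the per-class gcds e_i = gcd{m(ℓ) : ℓ ∈ L_i} are pairwise relatively prime. -/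
theorem multinet_class_exponents_coprime
    (L : Finset (Submodule ℂ (Fin 3 → ℂ)))
    (hL2 : ∀ ℓ ∈ L, Module.finrank ℂ ℓ = 2)
    (k d : ℕ) (hk : 3 ≤ k)
    (Li : Fin k → Finset (Submodule ℂ (Fin 3 → ℂ)))
    (hsub : ∀ i, Li i ⊆ L)
    (hcover : ∀ ℓ ∈ L, ∃ i, ℓ ∈ Li i)
    (hdisj : ∀ i j, i ≠ j → Disjoint (Li i) (Li j))
    (hne : ∀ i, (Li i).Nonempty)
    (m : Submodule ℂ (Fin 3 → ℂ) → ℕ)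
    (hm : ∀ ℓ ∈ L, 0 < m ℓ)
    (X : Finset (Submodule ℂ (Fin 3 → ℂ)))
    (hX : ∀ p ∈ X, Module.finrank ℂ p = 1 ∧ 3 ≤ (L.filter (fun ℓ => p ≤ ℓ)).card)
    (h1 : ∀ i, ∑ ℓ ∈ Li i, m ℓ = d)
    (h2 : ∀ i j, i ≠ j → ∀ ℓ ∈ Li i, ∀ ℓ' ∈ Li j, ℓ ⊓ ℓ' ∈ X)
    (n : Submodule ℂ (Fin 3 → ℂ) → ℕ)
    (h3 : ∀ p ∈ X, ∀ i, ∑ ℓ ∈ (Li i).filter (fun ℓ => p ≤ ℓ), m ℓ = n p)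
    (h4 : ∀ i, ∀ ℓ ∈ Li i, ∀ ℓ' ∈ Li i,
      Relation.ReflTransGen
        (fun a b => a ∈ Li i ∧ b ∈ Li i ∧ a ≠ b ∧ a ⊓ b ∉ X) ℓ ℓ')
    (hgcd : L.gcd m = 1) :
    ∀ i j : Fin k, i ≠ j → Nat.gcd ((Li i).gcd m) ((Li j).gcd m) = 1 := by
  intro i j hij
  have hEq : ∀ ℓ ∈ L, ∃ P, IsEquation ℓ P := fun ℓ hℓ => exists_isEquation (hL2 ℓ hℓ)
  choose! eqn heqn using hEq
  let N : Multinet k :=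
    { cls := Li
      m := m
      X := X
      n := n
      d := d
      eqn := eqn
      exists_ne := fun i => by
        have : Nontrivial (Fin k) := Fin.nontrivial_iff_two_le.2 (by omega)
        obtain ⟨j, hj⟩ := exists_ne i
        exact ⟨j, hj.symm⟩
      finrank_line := fun i ℓ hℓ => hL2 ℓ (hsub i hℓ)
      nonempty := hne
      m_pos := fun i ℓ hℓ => hm ℓ (hsub i hℓ)
      finrank_pt := fun p hp => (hX p hp).1
      sum_m := h1
      inter_mem := h2
      sum_pt := h3
      conn := h4
      isEquation := fun i ℓ hℓ => heqn ℓ (hsub i hℓ) }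
  obtain ⟨Λ, hΛ, hconst⟩ := N.exists_gcd_const i
  have hdvd : ∀ l, Nat.gcd (N.e i) (N.e j) ∣ N.e l := by
    intro l
    by_cases hl : i = l
    · exact hl ▸ Nat.gcd_dvd_left _ _
    · have : Nat.gcd (N.e i) (N.e j) = Nat.gcd (N.e i) (N.e l) :=
        Nat.eq_of_mul_eq_mul_left hΛ ((hconst i j hij).symm.trans (hconst i l hl))
      rw [this]
      exact Nat.gcd_dvd_right _ _
  change Nat.gcd (N.e i) (N.e j) = 1
  rw [← Nat.dvd_one, ← hgcd]
  refine Finset.dvd_gcd fun ℓ hℓ => ?_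
  obtain ⟨l, hl⟩ := hcover ℓ hℓ
  exact (hdvd l).trans (N.e_dvd (i := l) hl)
end

section
/- (Possible exponent triples.) Let G₁, G₂, G₃ ∈ ℂ[x,y,z] be homogeneous polynomials, each a product of linear forms, and let e₁, e₂, e₃ be integers with e_i ≥ 2 that are pairwise relatively prime, such that G₁^{e₁} + G₂^{e₂} = G₃^{e₃}, all three powers being homogeneous of the same degree d ≥ 1, and such that G₁ and G₂ are coprime. Then {e₁, e₂, e₃} = {2, 3, 5} as a multiset. -/
/-!
Restricting the identity to a generic affine line `t ↦ P + t Q` turns it into an identity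
`a ^ e₁ + b ^ e₂ = c ^ e₃` in `ℂ[t]`. Since `G₁` and `G₂` are products of linear forms, the line can
be chosen so that `a` and `b` stay coprime and `a` is not constant: the direction `Q` has to avoid
the lines of `G₁ G₂ = 0`, and `P` then has to avoid, for each factor `f` of `G₁` and `g` of `G₂`,
the zero set of the linear form `g(Q) f - f(Q) g`, which is nonzero because `f` and `g` are not
proportional (`exists_generic_line`).

The Mason–Stothers theorem, in the form `Polynomial.flt_catalan`, then gives
`1 / e₁ + 1 / e₂ + 1 / e₃ > 1`, whose only solution in pairwise coprime integers at least `2` is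
`{2, 3, 5}` (`triple_of_lt`).
-/

open Finset

/-- A homogeneous polynomial in ℂ[x,y,z] is completely reducible if it is a product
of (nonzero) linear forms, i.e. of nonzero homogeneous polynomials of degree 1. -/
def CompletelyReducible (G : MvPolynomial (Fin 3) ℂ) : Prop :=
  ∃ s : Multiset (MvPolynomial (Fin 3) ℂ),
    (∀ f ∈ s, MvPolynomial.IsHomogeneous f 1 ∧ f ≠ 0) ∧ G = s.prod

/-- Restriction of polynomials on `ℂ³` to the affine line `t ↦ P + t Q`. -/
noncomputable def lineRestrict (P Q : Fin 3 → ℂ) :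
    MvPolynomial (Fin 3) ℂ →ₐ[ℂ] Polynomial ℂ :=
  MvPolynomial.aeval fun i => Polynomial.C (P i) + Polynomial.X * Polynomial.C (Q i)

lemma lineRestrict_linear (P Q : Fin 3 → ℂ) {f : MvPolynomial (Fin 3) ℂ}
    (hf : f.IsHomogeneous 1) :
    lineRestrict P Q f = Polynomial.C (MvPolynomial.eval P f) +
      Polynomial.X * Polynomial.C (MvPolynomial.eval Q f) := by
  rw [← MvPolynomial.mem_homogeneousSubmodule,
    MvPolynomial.homogeneousSubmodule_one_eq_span_X] at hf
  induction hf using Submodule.span_induction with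
  | mem x h =>
    obtain ⟨i, rfl⟩ := h
    simp [lineRestrict]
  | zero => simp
  | add x y _ _ hx hy =>
    simp only [map_add, hx, hy]
    ring
  | smul a x _ hx =>
    simp only [map_smul, hx, MvPolynomial.smul_eval, Polynomial.C_mul, Polynomial.smul_eq_C_mul]
    ring

lemma exists_eval_ne_zero {p : MvPolynomial (Fin 3) ℂ} (hp : p ≠ 0) :
    ∃ v, MvPolynomial.eval v p ≠ 0 := by
  by_contra! h
  exact hp (MvPolynomial.funext fun v => by simpa using h v)

lemma not_isUnit_of_linear {f : MvPolynomial (Fin 3) ℂ}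
    (hf : f.IsHomogeneous 1) (h0 : f ≠ 0) : ¬ IsUnit f := by
  intro hu
  have h := (MvPolynomial.isUnit_iff_totalDegree_of_isReduced.mp hu).2
  rw [hf.totalDegree h0] at h
  exact one_ne_zero h

lemma exists_generic_line (s t : Multiset (MvPolynomial (Fin 3) ℂ))
    (hs : ∀ f ∈ s, MvPolynomial.IsHomogeneous f 1 ∧ f ≠ 0)
    (ht : ∀ f ∈ t, MvPolynomial.IsHomogeneous f 1 ∧ f ≠ 0)
    (hst : ∀ f ∈ s, ∀ g ∈ t, ¬ f ∣ g) :
    ∃ P Q : Fin 3 → ℂ,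
      (∀ f ∈ s, MvPolynomial.eval Q f ≠ 0) ∧ (∀ g ∈ t, MvPolynomial.eval Q g ≠ 0) ∧
      ∀ f ∈ s, ∀ g ∈ t, IsCoprime (lineRestrict P Q f) (lineRestrict P Q g) := by
  obtain ⟨Q, hQ⟩ := exists_eval_ne_zero (p := (s + t).prod) <| by
    refine Multiset.prod_ne_zero fun h => ?_
    rcases Multiset.mem_add.mp h with h | h
    · exact (hs 0 h).2 rfl
    · exact (ht 0 h).2 rfl
  have hQ' : ∀ f ∈ s + t, MvPolynomial.eval Q f ≠ 0 := fun f hf h0 => hQ <| by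
    obtain ⟨c, hc⟩ := Multiset.dvd_prod hf
    rw [hc, map_mul, h0, zero_mul]
  have hQs : ∀ f ∈ s, MvPolynomial.eval Q f ≠ 0 :=
    fun f hf => hQ' f (Multiset.mem_add.mpr (Or.inl hf))
  have hQt : ∀ f ∈ t, MvPolynomial.eval Q f ≠ 0 :=
    fun f hf => hQ' f (Multiset.mem_add.mpr (Or.inr hf))
  let D : MvPolynomial (Fin 3) ℂ × MvPolynomial (Fin 3) ℂ → MvPolynomial (Fin 3) ℂ := fun p =>
    MvPolynomial.C (MvPolynomial.eval Q p.2) * p.1 - MvPolynomial.C (MvPolynomial.eval Q p.1) * p.2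
  obtain ⟨P, hP⟩ := exists_eval_ne_zero (p := ((s ×ˢ t).map D).prod) <| by
    refine Multiset.prod_ne_zero fun h => ?_
    obtain ⟨⟨f, g⟩, hm, hD⟩ := Multiset.mem_map.mp h
    obtain ⟨hf, hg⟩ := Multiset.mem_product.mp hm
    apply hst f hf g hg
    have hD' := sub_eq_zero.mp hD
    have hu : IsUnit (MvPolynomial.C (σ := Fin 3) (MvPolynomial.eval Q f)) :=
      (hQs f hf).isUnit.map MvPolynomial.C
    exact (hu.dvd_mul_left).mp (hD' ▸ dvd_mul_left _ _)
  refine ⟨P, Q, hQs, hQt, fun f hf g hg => ?_⟩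
  have hd : MvPolynomial.eval P (D (f, g)) ≠ 0 := fun h0 => hP <| by
    obtain ⟨c, hc⟩ := Multiset.dvd_prod
      (Multiset.mem_map_of_mem D (Multiset.mem_product.mpr ⟨hf, hg⟩ : (f, g) ∈ s ×ˢ t))
    rw [hc, map_mul, h0, zero_mul]
  -- The combination `g(Q) f - f(Q) g` restricts to a nonzero constant on the line.
  have hc : lineRestrict P Q (D (f, g)) = Polynomial.C (MvPolynomial.eval P (D (f, g))) := by
    simp only [D, map_sub, map_mul, MvPolynomial.eval_C, lineRestrict_linear P Q (hs f hf).1,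
      lineRestrict_linear P Q (ht g hg).1, MvPolynomial.algHom_C, Polynomial.algebraMap_eq]
    ring
  have hu : IsUnit (lineRestrict P Q (D (f, g))) := hc ▸ hd.isUnit.map Polynomial.C
  obtain ⟨v, hv⟩ := hu.exists_left_inv
  refine ⟨v * lineRestrict P Q (MvPolynomial.C (MvPolynomial.eval Q g)),
    -v * lineRestrict P Q (MvPolynomial.C (MvPolynomial.eval Q f)), ?_⟩
  rw [← hv]
  simp only [D, map_sub, map_mul]
  ring

lemma isCoprime_multiset_prod {R : Type*} [CommRing R] (s t : Multiset R)
    (h : ∀ f ∈ s, ∀ g ∈ t, IsCoprime f g) : IsCoprime s.prod t.prod := by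
  have aux : ∀ (u : Multiset R) (x : R), (∀ f ∈ u, IsCoprime f x) → IsCoprime u.prod x := by
    intro u x
    induction u using Multiset.induction_on with
    | empty => simp [isCoprime_one_left]
    | cons a u ih =>
      intro hu
      rw [Multiset.prod_cons]
      exact (hu a (Multiset.mem_cons_self a u)).mul_left
        (ih fun f hf => hu f (Multiset.mem_cons_of_mem hf))
  exact aux s _ fun f hf => (aux t f fun g hg => (h f hf g hg).symm).symm

lemma pair_of_lt {q r : ℕ} (hq : 2 ≤ q) (hr : 2 ≤ r) (h2q : Nat.Coprime 2 q)
    (h2r : Nat.Coprime 2 r) (hqr : Nat.Coprime q r) (h : q * r < 2 * q + 2 * r) :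
    (q = 3 ∧ r = 5) ∨ (q = 5 ∧ r = 3) := by
  rw [Nat.coprime_two_left] at h2q h2r
  obtain ⟨m, rfl⟩ := h2q
  obtain ⟨n, rfl⟩ := h2r
  have hm : 1 ≤ m := by omega
  have hn : 1 ≤ n := by omega
  have hm' : m ≤ 2 := by nlinarith
  have hn' : n ≤ 2 := by nlinarith
  interval_cases m <;> interval_cases n <;> simp_all

lemma triple_of_lt {p q r : ℕ} (hp : 2 ≤ p) (hq : 2 ≤ q) (hr : 2 ≤ r)
    (hpq : Nat.Coprime p q) (hpr : Nat.Coprime p r) (hqr : Nat.Coprime q r)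
    (h : p * q * r < q * r + r * p + p * q) : ({p, q, r} : Multiset ℕ) = {2, 3, 5} := by
  have key : p = 2 ∨ q = 2 ∨ r = 2 := by
    by_contra! hne
    have hp3 : 3 ≤ p := by omega
    have hq3 : 3 ≤ q := by omega
    have hr3 : 3 ≤ r := by omega
    nlinarith [Nat.mul_le_mul_right (q * r) hp3, Nat.mul_le_mul_right (r * p) hq3,
      Nat.mul_le_mul_right (p * q) hr3]
  rcases key with rfl | rfl | rfl
  · rcases pair_of_lt hq hr hpq hpr hqr (by nlinarith) with ⟨rfl, rfl⟩ | ⟨rfl, rfl⟩ <;> decide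
  · rcases pair_of_lt hp hr hpq.symm hqr hpr (by nlinarith) with ⟨rfl, rfl⟩ | ⟨rfl, rfl⟩ <;> decide
  · rcases pair_of_lt hp hq hpr.symm hqr.symm hpq (by nlinarith) with
      ⟨rfl, rfl⟩ | ⟨rfl, rfl⟩ <;> decide

/-- Possible exponent triples: if G₁, G₂, G₃ are products of linear
forms in ℂ[x,y,z] with G₁, G₂ coprime, the exponents e_i ≥ 2 are pairwise relatively
prime, and G₁^{e₁} + G₂^{e₂} = G₃^{e₃} with all three powers homogeneous of the same
degree d ≥ 1, then {e₁, e₂, e₃} = {2, 3, 5} as a multiset. -/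
theorem exponent_triple_two_three_five
    (G₁ G₂ G₃ : MvPolynomial (Fin 3) ℂ)
    (e₁ e₂ e₃ : ℕ) (he₁ : 2 ≤ e₁) (he₂ : 2 ≤ e₂) (he₃ : 2 ≤ e₃)
    (hcop₁₂ : Nat.Coprime e₁ e₂) (hcop₁₃ : Nat.Coprime e₁ e₃)
    (hcop₂₃ : Nat.Coprime e₂ e₃)
    (hG₁ : CompletelyReducible G₁) (hG₂ : CompletelyReducible G₂)
    (hG₃ : CompletelyReducible G₃)
    (d : ℕ) (hd : 1 ≤ d)
    (hdeg₁ : MvPolynomial.IsHomogeneous (G₁ ^ e₁) d)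
    (hdeg₂ : MvPolynomial.IsHomogeneous (G₂ ^ e₂) d)
    (hdeg₃ : MvPolynomial.IsHomogeneous (G₃ ^ e₃) d)
    (heq : G₁ ^ e₁ + G₂ ^ e₂ = G₃ ^ e₃)
    (hcop : ∀ q : MvPolynomial (Fin 3) ℂ, q ∣ G₁ → q ∣ G₂ → IsUnit q) :
    ({e₁, e₂, e₃} : Multiset ℕ) = {2, 3, 5} := by
  obtain ⟨s, hs, rfl⟩ := hG₁
  obtain ⟨t, ht, rfl⟩ := hG₂
  obtain ⟨f₀, hf₀⟩ : ∃ f, f ∈ s := by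
    refine Multiset.exists_mem_of_ne_zero fun h => ?_
    subst h
    rw [Multiset.prod_zero, one_pow] at hdeg₁
    have := hdeg₁.inj_right (MvPolynomial.isHomogeneous_one (Fin 3) ℂ) one_ne_zero
    omega
  obtain ⟨P, Q, hQs, hQt, hPQ⟩ := exists_generic_line s t hs ht fun f hf g hg hfg =>
    not_isUnit_of_linear (hs f hf).1 (hs f hf).2
      (hcop f (Multiset.dvd_prod hf) (hfg.trans (Multiset.dvd_prod hg)))
  have hne : ∀ f : MvPolynomial (Fin 3) ℂ, f.IsHomogeneous 1 → MvPolynomial.eval Q f ≠ 0 →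
      (lineRestrict P Q f).natDegree = 1 := fun f hf hQ => by
    rw [lineRestrict_linear P Q hf, add_comm, mul_comm]
    exact Polynomial.natDegree_linear hQ
  have hprod : ∀ u : Multiset (MvPolynomial (Fin 3) ℂ),
      (∀ f ∈ u, MvPolynomial.IsHomogeneous f 1 ∧ f ≠ 0) →
      (∀ f ∈ u, MvPolynomial.eval Q f ≠ 0) → lineRestrict P Q u.prod ≠ 0 := fun u hu hQ => by
    rw [map_multiset_prod]
    refine Multiset.prod_ne_zero fun h => ?_
    obtain ⟨f, hf, hf'⟩ := Multiset.mem_map.mp h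
    simpa [hf'] using hne f (hu f hf).1 (hQ f hf)
  have ha := hprod s hs hQs
  have hb := hprod t ht hQt
  have hab : IsCoprime (lineRestrict P Q s.prod) (lineRestrict P Q t.prod) := by
    rw [map_multiset_prod, map_multiset_prod]
    refine isCoprime_multiset_prod _ _ fun a ha g hg => ?_
    obtain ⟨f, hf, rfl⟩ := Multiset.mem_map.mp ha
    obtain ⟨g, hg', rfl⟩ := Multiset.mem_map.mp hg
    exact hPQ f hf g hg'
  have hdega : 1 ≤ (lineRestrict P Q s.prod).natDegree := by
    rw [← hne f₀ (hs f₀ hf₀).1 (hQs f₀ hf₀)]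
    exact Polynomial.natDegree_le_of_dvd (map_dvd _ (Multiset.dvd_prod hf₀)) ha
  have heq' := congrArg (lineRestrict P Q) heq
  simp only [map_add, map_pow] at heq'
  have hc : lineRestrict P Q G₃ ≠ 0 := fun h0 => by
    rw [h0, zero_pow (by omega)] at heq'
    have hdvd : lineRestrict P Q s.prod ∣ lineRestrict P Q t.prod ^ e₂ := by
      rw [← neg_eq_of_add_eq_zero_right heq']
      exact (dvd_pow_self _ (by omega)).neg_right
    have hu := (hab.pow_right (n := e₂)).isUnit_of_dvd' dvd_rfl hdvd
    have := Polynomial.natDegree_eq_zero_of_isUnit hu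
    omega
  refine triple_of_lt he₁ he₂ he₃ hcop₁₂ hcop₁₃ hcop₂₃ ?_
  by_contra! hineq
  have hflt := Polynomial.flt_catalan (k := ℂ) (p := e₁) (q := e₂) (r := e₃)
    (by omega) (by omega) (by omega) hineq
    (Nat.cast_ne_zero.mpr (by omega)) (Nat.cast_ne_zero.mpr (by omega))
    (Nat.cast_ne_zero.mpr (by omega)) ha hb hc hab (u := 1) (v := 1) (w := -1)
    one_ne_zero one_ne_zero (neg_ne_zero.mpr one_ne_zero)
    (by simp only [map_one, map_neg, one_mul, neg_mul, heq', add_neg_cancel])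
  omega
end
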